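/- arXiv:1803.02682 — 2 statements merged into one kernel-verified Lean document; each statement's English description precedes it below -/
import Mathlib

section
/- Let A ∈ ℝ^{n×n}, B ∈ ℝ^{n×m}, let Q ∈ ℝ^{n×n} be symmetric positive semi-definite and R ∈ ℝ^{m×m} symmetric positive definite. If P is a symmetric positive semi-definite matrix satisfying the strict Riccati inequality Aᵀ P + P A − P B R⁻¹ Bᵀ P + Q ≺ 0, then the matrix A − B R⁻¹ Bᵀ P is Hurwitz. -/
open MeasureTheory Matrix Filter

/-- A real square matrix is Hurwitz if all of its (complex) eigenvalues have
negative real part. -/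
def IsHurwitz {k : ℕ} (M : Matrix (Fin k) (Fin k) ℝ) : Prop :=
  ∀ μ ∈ spectrum ℂ (M.map (algebraMap ℝ ℂ)), μ.re < 0

/-- The quadratic form of `Mᵀ P + P M` at `x` is `2 xᵀ P M x` when `P` is symmetric. -/
lemma dotProduct_lyapunov_mulVec {k : ℕ} {M P : Matrix (Fin k) (Fin k) ℝ} (hP : Pᵀ = P)
    (x : Fin k → ℝ) :
    x ⬝ᵥ (Mᵀ * P + P * M) *ᵥ x = 2 * (x ⬝ᵥ P *ᵥ (M *ᵥ x)) := by
  have h : x ⬝ᵥ (Mᵀ * P) *ᵥ x = x ⬝ᵥ (P * M) *ᵥ x := by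
    rw [dotProduct_mulVec, ← mulVec_transpose, transpose_mul, transpose_transpose, hP,
      dotProduct_comm]
  rw [add_mulVec, dotProduct_add, h, ← mulVec_mulVec]
  ring

/-- Lyapunov's criterion: if `P ⪰ 0` and `Mᵀ P + P M ≺ 0`, then `M` is Hurwitz. -/
theorem isHurwitz_of_lyapunov {k : ℕ} {M P : Matrix (Fin k) (Fin k) ℝ} (hP : P.PosSemidef)
    (hM : (-(Mᵀ * P + P * M)).PosDef) : IsHurwitz M := by
  intro μ hμ
  rw [← Matrix.spectrum_toLin', ← Module.End.hasEigenvalue_iff_mem_spectrum] at hμ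
  obtain ⟨v, hv⟩ := hμ.exists_hasEigenvector
  have hMv : M.map (algebraMap ℝ ℂ) *ᵥ v = μ • v := by simpa using hv.apply_eq_smul
  set x : Fin k → ℝ := fun i => (v i).re with hx
  set y : Fin k → ℝ := fun i => (v i).im with hy
  have hMx : M *ᵥ x = μ.re • x - μ.im • y := by
    ext i
    simpa [mulVec, dotProduct, hx, hy] using congrArg Complex.re (congrFun hMv i)
  have hMy : M *ᵥ y = μ.re • y + μ.im • x := by
    ext i
    simpa [mulVec, dotProduct, hx, hy] using congrArg Complex.im (congrFun hMv i)
  have hPT : Pᵀ = P := by simpa using hP.isHermitian.eq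
  have hsymm : x ⬝ᵥ P *ᵥ y = y ⬝ᵥ P *ᵥ x := by
    rw [dotProduct_mulVec, ← mulVec_transpose, hPT, dotProduct_comm]
  have hform (z : Fin k → ℝ) :
      z ⬝ᵥ (-(Mᵀ * P + P * M)) *ᵥ z = -(2 * (z ⬝ᵥ P *ᵥ (M *ᵥ z))) := by
    rw [neg_mulVec, dotProduct_neg, dotProduct_lyapunov_mulVec hPT]
  have hnonneg (z : Fin k → ℝ) : 0 ≤ z ⬝ᵥ P *ᵥ z := by
    simpa using hP.dotProduct_mulVec_nonneg z
  have hform_nonneg (z : Fin k → ℝ) : 0 ≤ -(2 * (z ⬝ᵥ P *ᵥ (M *ᵥ z))) := by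
    simpa only [star_trivial, hform] using hM.posSemidef.dotProduct_mulVec_nonneg z
  have hform_pos (z : Fin k → ℝ) (hz : z ≠ 0) : 0 < -(2 * (z ⬝ᵥ P *ᵥ (M *ᵥ z))) := by
    simpa only [star_trivial, hform] using hM.dotProduct_mulVec_pos hz
  have hpos : 0 < -(2 * (x ⬝ᵥ P *ᵥ (M *ᵥ x))) + -(2 * (y ⬝ᵥ P *ᵥ (M *ᵥ y))) := by
    by_cases hx0 : x = 0
    · have hy0 : y ≠ 0 := fun hy0 => hv.2 <| by
        ext i
        exact Complex.ext (congrFun hx0 i) (congrFun hy0 i)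
      exact add_pos_of_nonneg_of_pos (hform_nonneg x) (hform_pos y hy0)
    · exact add_pos_of_pos_of_nonneg (hform_pos x hx0) (hform_nonneg y)
  rw [hMx, hMy] at hpos
  simp only [mulVec_sub, mulVec_add, mulVec_smul, dotProduct_sub, dotProduct_add,
    dotProduct_smul, smul_eq_mul, hsymm] at hpos
  by_contra! hre
  nlinarith [mul_nonneg hre (hnonneg x), mul_nonneg hre (hnonneg y)]

/-- if `P ⪰ 0` satisfies the strict Riccati inequality
`Aᵀ P + P A − P B R⁻¹ Bᵀ P + Q ≺ 0` (with `Q ⪰ 0`, `R ≻ 0`), then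
`A − B R⁻¹ Bᵀ P` is Hurwitz. -/
theorem stmt5 {n m : ℕ} (A : Matrix (Fin n) (Fin n) ℝ) (B : Matrix (Fin n) (Fin m) ℝ)
    (Q : Matrix (Fin n) (Fin n) ℝ) (R : Matrix (Fin m) (Fin m) ℝ)
    (hQ : Q.PosSemidef) (hR : R.PosDef)
    (P : Matrix (Fin n) (Fin n) ℝ) (hP : P.PosSemidef)
    (hric : (-(Aᵀ * P + P * A - P * B * R⁻¹ * Bᵀ * P + Q)).PosDef) :
    IsHurwitz (A - B * R⁻¹ * Bᵀ * P) := by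
  have hPT : Pᵀ = P := by simpa using hP.isHermitian.eq
  have hRT : R⁻¹ᵀ = R⁻¹ := by simpa using hR.inv.isHermitian.eq
  have hPSP : (P * B * R⁻¹ * Bᵀ * P).PosSemidef := by
    simpa [hPT, Matrix.mul_assoc] using hR.inv.posSemidef.mul_mul_conjTranspose_same (P * B)
  refine isHurwitz_of_lyapunov hP ?_
  convert (hric.add_posSemidef hPSP).add_posSemidef hQ using 1
  simp only [transpose_sub, transpose_mul, transpose_transpose, hPT, hRT, Matrix.sub_mul,
    Matrix.mul_sub, Matrix.mul_assoc]
  abel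
end

section
/- Let A ∈ ℝ^{n×n}, B ∈ ℝ^{n×m} with (A, B) stabilizable, let Q ⪰ 0 and R ≻ 0 be symmetric, and let λ_N > 0 and c ∈ ℝ satisfy 0 < c < 2/λ_N. Then there exists a symmetric positive semi-definite matrix P satisfying the strict Riccati inequality Aᵀ P + P A + (c² λ_N² − 2c λ_N) P B R⁻¹ Bᵀ P + λ_N Q ≺ 0. -/
open MeasureTheory Matrix Filter

open scoped Matrix.Norms.L2Operator MatrixOrder ComplexOrder

theorem Matrix.posDef_one_sub_of_norm_lt_one {𝕜 ι : Type*} [RCLike 𝕜] [Fintype ι] [DecidableEq ι]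
    {S : Matrix ι ι 𝕜} (hS : S.IsHermitian) (h : ‖S‖ < 1) : (1 - S).PosDef := by
  have hH : (1 - S).IsHermitian := isHermitian_one.sub hS
  refine .of_dotProduct_mulVec_pos hH fun x hx => ?_
  have him : RCLike.im (star x ⬝ᵥ ((1 - S) *ᵥ x)) = 0 := hH.im_star_dotProduct_mulVec_self x
  refine RCLike.pos_iff.mpr ⟨?_, him⟩
  set y : EuclideanSpace 𝕜 ι := WithLp.toLp 2 x
  have hy : 0 < ‖y‖ := norm_pos_iff.mpr fun h0 => hx <| by
    simpa [y] using congrArg WithLp.ofLp h0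
  have e : star x ⬝ᵥ ((1 - S) *ᵥ x) = inner 𝕜 y y - inner 𝕜 y (toEuclideanCLM (𝕜 := 𝕜) S y) := by
    simp [y, EuclideanSpace.inner_eq_star_dotProduct, sub_mulVec, dotProduct_comm,
      -inner_self_eq_norm_sq_to_K]
  have h1 : RCLike.re (inner 𝕜 y (toEuclideanCLM (𝕜 := 𝕜) S y)) ≤ ‖y‖ * (‖S‖ * ‖y‖) :=
    (re_inner_le_norm _ _).trans <| mul_le_mul_of_nonneg_left
      ((toEuclideanCLM (𝕜 := 𝕜) S).le_opNorm y) hy.le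
  rw [e, map_sub, inner_self_eq_norm_sq]
  nlinarith [mul_pos hy hy]

theorem Matrix.PosDef.exists_sub_smul {ι : Type*} [Fintype ι] [DecidableEq ι]
    {N S : Matrix ι ι ℝ} (hN : N.PosDef) (hS : S.IsHermitian) :
    ∃ ε : ℝ, 0 < ε ∧ (N - ε • S).PosDef := by
  obtain ⟨L, hL⟩ := CStarAlgebra.nonneg_iff_eq_star_mul_self.mp hN.posSemidef.nonneg
  have hLu : IsUnit L := by
    have := hN.isUnit
    rw [hL, isUnit_iff_isUnit_det, det_mul] at this
    exact (isUnit_iff_isUnit_det _).mpr (isUnit_of_mul_isUnit_right this)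
  have hd := (isUnit_iff_isUnit_det _).mp hLu
  set T := star L⁻¹ * S * L⁻¹ with hT
  have hTH : T.IsHermitian := isHermitian_conjTranspose_mul_mul _ hS
  have hTS : star L * T * L = S := by
    have h1 : L⁻¹ * L = 1 := nonsing_inv_mul L hd
    have h2 : star L * star L⁻¹ = 1 := by rw [← star_mul, h1, star_one]
    calc star L * T * L = (star L * star L⁻¹) * S * (L⁻¹ * L) := by
          simp only [hT, Matrix.mul_assoc]
      _ = S := by simp [h1, h2]
  refine ⟨(‖T‖ + 1)⁻¹, by positivity, ?_⟩
  have hp : (1 - (‖T‖ + 1)⁻¹ • T).PosDef := by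
    refine posDef_one_sub_of_norm_lt_one ?_ ?_
    · rw [IsHermitian, conjTranspose_smul, hTH.eq]; simp
    · rw [norm_smul, norm_inv, Real.norm_of_nonneg (by positivity), inv_mul_lt_one₀ (by positivity)]
      linarith
  have := (Matrix.IsUnit.posDef_star_left_conjugate_iff hLu).mpr hp
  rwa [mul_sub, sub_mul, mul_one, ← hL, Matrix.mul_smul, Matrix.smul_mul, hTS] at this

theorem Matrix.PosDef.of_map_complex {ι : Type*} [Fintype ι] {S : Matrix ι ι ℝ}
    (h : (S.map (algebraMap ℝ ℂ)).PosDef) : S.PosDef := by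
  refine .of_dotProduct_mulVec_pos ?_ fun x hx => ?_
  · ext i j
    have := congrFun (congrFun h.isHermitian i) j
    simpa using this
  · have hx' : (algebraMap ℝ ℂ) ∘ x ≠ 0 := fun h0 => hx <| by
      ext i
      simpa using congrFun h0 i
    have h1 := h.dotProduct_mulVec_pos hx'
    have e : star ((algebraMap ℝ ℂ) ∘ x) ⬝ᵥ (S.map (algebraMap ℝ ℂ) *ᵥ ((algebraMap ℝ ℂ) ∘ x)) =
        ((star x ⬝ᵥ (S *ᵥ x) : ℝ) : ℂ) := by
      simp [dotProduct, mulVec]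
    rw [e] at h1
    exact_mod_cast h1

theorem exists_norm_pow_lt_one {𝔸 : Type*} [NormedRing 𝔸] [NormedAlgebra ℂ 𝔸] [CompleteSpace 𝔸]
    {a : 𝔸} (h : ∀ z ∈ spectrum ℂ a, ‖z‖ < 1) : ∃ k : ℕ, ‖a ^ k‖ < 1 := by
  cases subsingleton_or_nontrivial 𝔸
  · exact ⟨0, by rw [Subsingleton.elim (a ^ 0) 0, norm_zero]; exact one_pos⟩
  have hr : spectralRadius ℂ a < 1 := spectrum.spectralRadius_lt_of_forall_lt a (r := 1) h
  have ht := spectrum.pow_nnnorm_pow_one_div_tendsto_nhds_spectralRadius a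
  obtain ⟨k, hk, hk0⟩ := ((ht.eventually_lt_const hr).and (eventually_gt_atTop 0)).exists
  refine ⟨k, ?_⟩
  by_contra! hge
  refine hk.not_ge (ENNReal.one_le_rpow ?_ (one_div_pos.mpr (Nat.cast_pos.mpr hk0)))
  exact_mod_cast hge

/-- The Cayley transform of a complex matrix with spectrum in the open left half plane has its
spectrum in the open unit disc. -/
theorem norm_lt_one_of_mem_spectrum_cayley {ι : Type*} [Fintype ι] [DecidableEq ι]
    {M T : Matrix ι ι ℂ} (hT : (1 - M) * T = 1) (hM : ∀ μ ∈ spectrum ℂ M, μ.re < 0)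
    {z : ℂ} (hz : z ∈ spectrum ℂ ((1 + M) * T)) : ‖z‖ < 1 := by
  have hT' : T * (1 - M) = 1 := mul_eq_one_comm.mp hT
  have key : (algebraMap ℂ (Matrix ι ι ℂ) z - (1 + M) * T) =
      ((z - 1) • (1 : Matrix ι ι ℂ) - (z + 1) • M) * T := by
    have : algebraMap ℂ (Matrix ι ι ℂ) z = z • ((1 - M) * T) := by
      rw [hT, Algebra.algebraMap_eq_smul_one]
    rw [this, ← smul_mul_assoc, ← sub_mul]
    congr 1
    module
  have hTu : IsUnit T := ⟨⟨T, 1 - M, hT', hT⟩, rfl⟩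
  rw [spectrum.mem_iff, key] at hz
  by_cases h1 : z + 1 = 0
  · refine absurd ?_ hz
    rw [h1, zero_smul, sub_zero]
    refine IsUnit.mul ?_ hTu
    have h2 : z - 1 ≠ 0 := by
      rw [eq_neg_of_add_eq_zero_left h1]; norm_num
    exact (isUnit_one.smul (Units.mk0 _ h2))
  · have hmem : (z - 1) / (z + 1) ∈ spectrum ℂ M := by
      rw [spectrum.mem_iff]
      intro hu
      refine hz (IsUnit.mul ?_ hTu)
      have := hu.smul (Units.mk0 _ h1)
      convert! this using 1
      rw [Algebra.algebraMap_eq_smul_one, Units.smul_def, Units.val_mk0, smul_sub, smul_smul,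
        mul_div_cancel₀ _ h1]
    have hre := hM _ hmem
    have hpos : 0 < Complex.normSq (z + 1) := Complex.normSq_pos.mpr h1
    rw [Complex.div_re, ← add_div, div_neg_iff] at hre
    have h3 : (z - 1).re * (z + 1).re + (z - 1).im * (z + 1).im < 0 := by
      rcases hre with h | h
      · linarith [h.2]
      · exact h.1
    have h4 : ‖z‖ ^ 2 < 1 := by
      rw [← Complex.normSq_eq_norm_sq, Complex.normSq_apply]
      simp at h3
      nlinarith
    exact (sq_lt_one_iff₀ (norm_nonneg z)).mp h4

/-- Lyapunov's theorem. -/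
theorem IsHurwitz.exists_posDef_lyapunov {k : ℕ} {M : Matrix (Fin k) (Fin k) ℝ}
    (hM : IsHurwitz M) :
    ∃ X : Matrix (Fin k) (Fin k) ℝ, X.PosDef ∧ (-(M * X + X * Mᵀ)).PosDef := by
  set φ := (algebraMap ℝ ℂ).mapMatrix (m := Fin k)
  have hu : IsUnit (1 - M) := by
    have h1 : (1 : ℂ) ∉ spectrum ℂ (M.map (algebraMap ℝ ℂ)) := fun h => by
      have := hM 1 h
      norm_num at this
    have h2 : IsUnit (φ (1 - M)) := by
      rw [map_sub, map_one]
      simpa [spectrum.mem_iff, φ] using h1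
    rw [isUnit_iff_isUnit_det] at h2 ⊢
    rw [← RingHom.map_det] at h2
    simpa using h2
  have hd := (isUnit_iff_isUnit_det _).mp hu
  set C := (1 + M) * (1 - M)⁻¹ with hC
  obtain ⟨j, hj⟩ : ∃ j : ℕ, ‖(φ C) ^ j‖ < 1 := by
    refine exists_norm_pow_lt_one fun z hz => ?_
    rw [hC, map_mul, map_add, map_one] at hz
    refine norm_lt_one_of_mem_spectrum_cayley (M := φ M) ?_ hM hz
    rw [← map_one φ, ← map_sub, ← map_mul]
    simp [mul_nonsing_inv _ hd]
  have hD : (1 - C ^ j * (C ^ j)ᵀ).PosDef := by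
    refine PosDef.of_map_complex ?_
    have e : (1 - C ^ j * (C ^ j)ᵀ).map (algebraMap ℝ ℂ) = 1 - (φ C) ^ j * ((φ C) ^ j)ᴴ := by
      have e1 : ((φ C) ^ j)ᴴ = φ (C ^ j)ᵀ := by
        rw [← map_pow]
        ext a b
        simp [φ, -transpose_pow]
      rw [e1, ← map_pow, ← map_mul, ← map_one φ, ← map_sub]
      rfl
    rw [e]
    refine posDef_one_sub_of_norm_lt_one (isHermitian_mul_conjTranspose_self _) ?_
    refine (norm_mul_le _ _).trans_lt ?_
    rw [l2_opNorm_conjTranspose]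
    nlinarith [norm_nonneg ((φ C) ^ j)]
  set X := ∑ i ∈ Finset.range j, C ^ i * (C ^ i)ᵀ with hX
  have hX0 : X.PosSemidef := posSemidef_sum _ fun i _ => by
    simpa using posSemidef_self_mul_conjTranspose (C ^ i)
  have hstein : X - C * X * Cᵀ = 1 - C ^ j * (C ^ j)ᵀ := by
    have h1 : C * X * Cᵀ = ∑ i ∈ Finset.range j, C ^ (i + 1) * (C ^ (i + 1))ᵀ := by
      rw [hX, Finset.mul_sum, Finset.sum_mul]
      refine Finset.sum_congr rfl fun i _ => ?_
      rw [pow_succ' C i, transpose_mul C]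
      simp only [Matrix.mul_assoc]
    rw [h1, hX, ← Finset.sum_sub_distrib, Finset.sum_range_sub']
    simp
  have hXpos : X.PosDef := by
    rw [sub_eq_iff_eq_add.mp hstein]
    exact hD.add_posSemidef (by simpa using hX0.mul_mul_conjTranspose_same C)
  refine ⟨X, hXpos, ?_⟩
  have hC2 : (1 - M) * C = 1 + M := by
    have hcomm : (1 - M) * (1 + M) = (1 + M) * (1 - M) := by noncomm_ring
    rw [hC, ← Matrix.mul_assoc, hcomm, Matrix.mul_assoc, mul_nonsing_inv _ hd, Matrix.mul_one]
  have hL := (Matrix.IsUnit.posDef_star_right_conjugate_iff hu).mpr hD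
  have e : (1 - M) * (1 - C ^ j * (C ^ j)ᵀ) * star (1 - M) = (2 : ℝ) • -(M * X + X * Mᵀ) := by
    have h1 : (1 - M) * (C * X * Cᵀ) * (1 - M)ᵀ = (1 + M) * X * (1 + M)ᵀ := by
      rw [← hC2, transpose_mul (1 - M)]
      simp only [Matrix.mul_assoc]
    rw [← hstein, star_eq_conjTranspose, conjTranspose_eq_transpose_of_trivial, mul_sub, sub_mul,
      h1, two_smul]
    simp only [transpose_sub, transpose_add, transpose_one]
    noncomm_ring
  rw [e] at hL
  have := hL.smul (show (0 : ℝ) < 2⁻¹ by norm_num)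
  rwa [smul_smul, inv_mul_cancel₀ two_ne_zero, one_smul] at this

/-- if `(A,B)` is stabilizable, `Q ⪰ 0`, `R ≻ 0`, `λ_N > 0` and
`0 < c < 2/λ_N`, then there exists a symmetric psd `P` with
`Aᵀ P + P A + (c²λ_N² − 2cλ_N) P B R⁻¹ Bᵀ P + λ_N Q ≺ 0`. -/
theorem stmt10 {n m : ℕ}
    (A : Matrix (Fin n) (Fin n) ℝ) (B : Matrix (Fin n) (Fin m) ℝ)
    (hstab : ∃ F : Matrix (Fin m) (Fin n) ℝ, IsHurwitz (A + B * F))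
    (Q : Matrix (Fin n) (Fin n) ℝ) (R : Matrix (Fin m) (Fin m) ℝ)
    (hQ : Q.PosSemidef) (hR : R.PosDef)
    (lamN c : ℝ) (hlamN : 0 < lamN) (hc0 : 0 < c) (hc : c < 2 / lamN) :
    ∃ P : Matrix (Fin n) (Fin n) ℝ, P.PosSemidef ∧
      (-(Aᵀ * P + P * A +
          (c ^ 2 * lamN ^ 2 - 2 * c * lamN) • (P * B * R⁻¹ * Bᵀ * P) +
          lamN • Q)).PosDef := by
  obtain ⟨F, hF⟩ := hstab
  obtain ⟨X, hX, hN⟩ := hF.exists_posDef_lyapunov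
  set μ := 2 * c * lamN - c ^ 2 * lamN ^ 2 with hμ
  have hμpos : 0 < μ := by
    have : c * lamN < 2 := (lt_div_iff₀ hlamN).mp hc
    nlinarith [mul_pos hc0 hlamN]
  have hXt : Xᵀ = X := by simpa using hX.isHermitian.eq
  have hRt : Rᵀ = R := by simpa using hR.isHermitian.eq
  have hQt : Qᵀ = Q := by simpa using hQ.isHermitian.eq
  have hRd := (isUnit_iff_isUnit_det _).mp hR.isUnit
  set S := μ⁻¹ • (X * Fᵀ * R * F * X) + lamN • (X * Q * X) with hS
  have hSH : S.IsHermitian := by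
    rw [IsHermitian, conjTranspose_eq_transpose_of_trivial]
    simp [hS, hXt, hRt, hQt, Matrix.mul_assoc]
  obtain ⟨ε, hε, hNS⟩ := hN.exists_sub_smul hSH
  set E := μ • (B * R⁻¹) + ε • (X * Fᵀ) with hE
  have hW : (ε • (-((A + B * F) * X + X * (A + B * F)ᵀ) - ε • S) +
      μ⁻¹ • (E * R * Eᵀ)).PosDef := by
    refine (hNS.smul hε).add_posSemidef (PosSemidef.smul ?_ (inv_pos.mpr hμpos).le)
    simpa using hR.posSemidef.mul_mul_conjTranspose_same E
  have hWe : ε • (-((A + B * F) * X + X * (A + B * F)ᵀ) - ε • S) + μ⁻¹ • (E * R * Eᵀ) =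
      -(ε • (A * X + X * Aᵀ) - μ • (B * R⁻¹ * Bᵀ) + (ε ^ 2 * lamN) • (X * Q * X)) := by
    have hERE : E * R * Eᵀ = μ ^ 2 • (B * R⁻¹ * Bᵀ) + (μ * ε) • (B * F * X + X * Fᵀ * Bᵀ) +
        ε ^ 2 • (X * Fᵀ * R * F * X) := by
      have hRi : R⁻¹ᵀ = R⁻¹ := by rw [transpose_nonsing_inv, hRt]
      have h1 : E * R = μ • B + ε • (X * Fᵀ * R) := by
        rw [hE, Matrix.add_mul, Matrix.smul_mul, Matrix.smul_mul, Matrix.mul_assoc B,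
          nonsing_inv_mul _ hRd, Matrix.mul_one]
      have h2 : Eᵀ = μ • (R⁻¹ * Bᵀ) + ε • (F * X) := by
        simp [hE, hXt, hRi]
      have h3 : R * (R⁻¹ * Bᵀ) = Bᵀ := by
        rw [← Matrix.mul_assoc, mul_nonsing_inv _ hRd, Matrix.one_mul]
      rw [h1, h2]
      simp only [Matrix.add_mul, Matrix.mul_add, Matrix.smul_mul, Matrix.mul_smul,
        Matrix.mul_assoc, h3]
      module
    rw [hERE, hS]
    simp only [Matrix.add_mul, Matrix.mul_add, transpose_add, transpose_mul, Matrix.mul_assoc]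
    match_scalars <;> field_simp <;> ring
  rw [hWe] at hW
  have hXd := (isUnit_iff_isUnit_det _).mp hX.isUnit
  have hXX : X * X⁻¹ = 1 := mul_nonsing_inv _ hXd
  have hXX' : X⁻¹ * X = 1 := nonsing_inv_mul _ hXd
  have hXX'' (Z : Matrix (Fin n) (Fin n) ℝ) : X⁻¹ * (X * Z) = Z := by
    rw [← Matrix.mul_assoc, hXX', Matrix.one_mul]
  refine ⟨ε⁻¹ • X⁻¹, (hX.inv.smul (inv_pos.mpr hε)).posSemidef, ?_⟩
  have hXiu : IsUnit X⁻¹ := hX.inv.isUnit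
  have hfin := ((Matrix.IsUnit.posDef_star_left_conjugate_iff hXiu).mpr hW).smul
    (show 0 < (ε ^ 2)⁻¹ by positivity)
  convert! hfin using 1
  rw [star_eq_conjTranspose, hX.inv.isHermitian.eq,
    show c ^ 2 * lamN ^ 2 - 2 * c * lamN = -μ by rw [hμ]; ring]
  simp only [Matrix.add_mul, Matrix.mul_add, Matrix.sub_mul, Matrix.mul_sub, Matrix.smul_mul,
    Matrix.mul_smul, Matrix.mul_neg, Matrix.neg_mul, Matrix.mul_assoc, hXX, hXX'', Matrix.mul_one]
  match_scalars <;> field_simp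
end
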